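/- Let a and b be coprime natural numbers and t a natural number such that t divides a²+1, with gcd(b,t)=1. Let a* be an integer with a·a* ≡ 1 (mod b) and b* an integer with b·b* ≡ 1 (mod a). If b ≡ 1 (mod t) or b ≡ −1 (mod t), then S(t·a*, b) + S(t·b*, a) = (a² + b² + t²)/(t·a·b) − 3. -/

import Mathlib

/-- The sawtooth function `((x))`: `x - ⌊x⌋ - 1/2` if `x ∉ ℤ`, and `0` if `x ∈ ℤ`. -/
noncomputable def saw (x : ℝ) : ℝ := if Int.fract x = 0 then 0 else x - ⌊x⌋ - 1/2

/-- The classical Dedekind sum `s(a,b) = ∑_{k=1}^b ((k/b)) ((a k / b))`. -/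
noncomputable def dedekindSum (a : ℤ) (b : ℕ) : ℝ :=
  ∑ k ∈ Finset.Icc 1 b, saw ((k : ℝ) / b) * saw ((a : ℝ) * k / b)

/-- The normalized Dedekind sum `S(a,b) = 12 s(a,b)`. -/
noncomputable def S (a : ℤ) (b : ℕ) : ℝ := 12 * dedekindSum a b

/-- Right-continuous sawtooth of `n / m`. -/
noncomputable def pp (m n : ℕ) : ℝ := ((n % m : ℕ) : ℝ) / m - 1 / 2

/-- Sawtooth on residue classes. -/
noncomputable def sg (b : ℕ) (z : ZMod b) : ℝ := if z = 0 then 0 else (z.val : ℝ) / b - 1 / 2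

/-- Homogeneous Dedekind sum. -/
noncomputable def DD (b : ℕ) [NeZero b] (x y : ZMod b) : ℝ :=
  ∑ k : ZMod b, sg b (x * k) * sg b (y * k)

lemma sum_range_zmod (b : ℕ) [NeZero b] (f : ZMod b → ℝ) :
    ∑ k ∈ Finset.range b, f (k : ZMod b) = ∑ z : ZMod b, f z := by
  refine Finset.sum_bij (fun k _ => (k : ZMod b)) (by simp) ?_ ?_ (by simp)
  · intro x hx y hy h
    simp only [Finset.mem_range] at hx hy
    have := congrArg ZMod.val h
    rwa [ZMod.val_natCast_of_lt hx, ZMod.val_natCast_of_lt hy] at this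
  · intro z _
    exact ⟨z.val, by simpa using ZMod.val_lt z, by simp⟩

lemma saw_eq_sg (b : ℕ) [NeZero b] (x : ℤ) : saw ((x : ℝ) / b) = sg b (x : ZMod b) := by
  have hb : (b : ℝ) ≠ 0 := by exact_mod_cast NeZero.ne b
  have hv : (((x : ZMod b)).val : ℝ) = ((x % b : ℤ) : ℝ) := by
    rw [← ZMod.val_intCast]; simp
  have hdiv : ((x % b : ℤ) : ℝ) = x - b * ((x / b : ℤ) : ℝ) := by
    rw [Int.emod_def]; push_cast; ring
  have hfl : ⌊(x : ℝ) / b⌋ = x / (b : ℤ) := by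
    have := Rat.floor_intCast_div_natCast x b
    rw [← this, ← Rat.floor_cast (α := ℝ)]; push_cast; rfl
  unfold saw sg
  have hiff : Int.fract ((x : ℝ) / b) = 0 ↔ (x : ZMod b) = 0 := by
    rw [← ZMod.val_eq_zero, ← Nat.cast_eq_zero (R := ℝ), hv, hdiv, Int.fract, hfl]
    constructor
    · intro h; field_simp at h; linarith
    · intro h; field_simp; linarith
  simp only [hiff]
  split_ifs
  · rfl
  · rw [hv, hdiv, hfl]; field_simp

lemma DD_smul (b : ℕ) [NeZero b] (x y : ZMod b) (u : (ZMod b)ˣ) :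
    DD b (u * x) (u * y) = DD b x y := by
  unfold DD
  rw [← Equiv.sum_comp (Units.mulLeft u) (fun k => sg b (x * k) * sg b (y * k))]
  refine Finset.sum_congr rfl fun k _ => ?_
  simp only [Units.mulLeft_apply]
  congr 2 <;> ring

lemma DD_comm (b : ℕ) [NeZero b] (x y : ZMod b) : DD b x y = DD b y x := by
  unfold DD; simp_rw [mul_comm (sg b (x * _))]

lemma sg_neg (b : ℕ) [NeZero b] (x : ZMod b) : sg b (-x) = - sg b x := by
  have hb : (b : ℝ) ≠ 0 := by exact_mod_cast NeZero.ne b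
  unfold sg
  by_cases h : x = 0
  · simp [h]
  · simp only [neg_eq_zero, h, if_false, ZMod.neg_val]
    rw [Nat.cast_sub (ZMod.val_lt x).le]; field_simp; ring

lemma DD_neg (b : ℕ) [NeZero b] (x y : ZMod b) : DD b (-x) y = - DD b x y := by
  unfold DD; simp [sg_neg]

lemma S_eq (b : ℕ) [NeZero b] (x : ℤ) : S x b = 12 * DD b 1 (x : ZMod b) := by
  unfold S dedekindSum DD
  congr 1
  rw [← sum_range_zmod b (fun z => sg b (1 * z) * sg b ((x : ZMod b) * z))]
  have h : ∀ k : ℕ, saw ((k : ℝ) / b) * saw ((x : ℝ) * k / b) =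
      sg b (1 * (k : ZMod b)) * sg b ((x : ZMod b) * (k : ZMod b)) := by
    intro k
    have h1 := saw_eq_sg b (k : ℤ)
    have h2 := saw_eq_sg b (x * k)
    push_cast at h1 h2
    rw [h1, h2, one_mul]
  simp_rw [h]
  rw [← Finset.Ico_add_one_right_eq_Icc, Finset.sum_Ico_eq_sum_range]
  simp only [Nat.add_sub_cancel]
  have e1 := Finset.sum_range_succ
    (fun k : ℕ => sg b (1 * (k : ZMod b)) * sg b ((x : ZMod b) * (k : ZMod b))) b
  rw [Finset.sum_range_succ'] at e1
  simp only [CharP.cast_eq_zero, mul_zero] at e1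
  simpa [add_comm] using e1

lemma pp_succ (m n : ℕ) (hm : 0 < m) :
    pp m n + 1 / m = pp m (n + 1) + (if m ∣ n + 1 then 1 else 0) := by
  have hm' : (m : ℝ) ≠ 0 := by positivity
  unfold pp
  split_ifs with h
  · have h1 : (n + 1) % m = 0 := Nat.mod_eq_zero_of_dvd h
    have h2 : n % m + 1 = m := by
      rw [Nat.add_mod_eq_ite] at h1
      have h5 := Nat.mod_lt n hm
      rcases Nat.lt_or_ge 1 m with h6 | h6
      · rw [Nat.mod_eq_of_lt h6] at h1
        split_ifs at h1 <;> omega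
      · omega
    have h3 : ((n % m : ℕ) : ℝ) = m - 1 := by
      have : ((n % m + 1 : ℕ) : ℝ) = m := by exact_mod_cast h2
      push_cast at this; linarith
    rw [h1, h3]; field_simp; push_cast; ring
  · have h2 : (n + 1) % m = n % m + 1 := by
      rw [Nat.add_mod_eq_ite]
      have := Nat.mod_lt n hm
      rcases Nat.lt_or_ge 1 m with h1 | h1
      · rw [Nat.mod_eq_of_lt h1]
        split_ifs with h4
        · exfalso; apply h
          rw [Nat.dvd_iff_mod_eq_zero, Nat.add_mod, Nat.mod_eq_of_lt h1]
          have : n % m + 1 = m := by omega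
          simp [this]
        · rfl
      · exfalso; apply h
        have : m = 1 := by omega
        simp [this]
    rw [h2]; push_cast; ring

lemma sum_dvd (m a : ℕ) (hm : 0 < m) (g : ℕ → ℝ) :
    ∑ n ∈ Finset.range (a * m), (if m ∣ n + 1 then 1 else 0) * g (n + 1) =
      ∑ k ∈ Finset.range a, g (m * (k + 1)) := by
  induction a with
  | zero => simp
  | succ a ih =>
    rw [Finset.sum_range_succ, ← ih, Nat.add_mul, one_mul, Finset.sum_range_add]
    congr 1
    rw [Finset.sum_eq_single (m - 1)]
    · have : a * m + (m - 1) + 1 = m * (a + 1) := by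
        rw [Nat.mul_add, Nat.mul_comm a m]; omega
      rw [this]; simp
    · intro i hi hne
      have hi := Finset.mem_range.1 hi
      rw [if_neg, zero_mul]
      rw [add_assoc, Nat.dvd_add_right (Dvd.intro_left a rfl)]
      intro h
      have := Nat.le_of_dvd (by omega) h
      omega
    · intro h; exact absurd (Finset.mem_range.2 (by omega)) h

lemma sum_range_id (a : ℕ) : ∑ k ∈ Finset.range a, (k : ℝ) = a * (a - 1) / 2 := by
  induction a with
  | zero => simp
  | succ a ih => rw [Finset.sum_range_succ, ih]; push_cast; ring

lemma sum_range_sq' (a : ℕ) :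
    ∑ k ∈ Finset.range a, (k : ℝ) ^ 2 = a * (a - 1) * (2 * a - 1) / 6 := by
  induction a with
  | zero => simp
  | succ a ih => rw [Finset.sum_range_succ, ih]; push_cast; ring

/-- distribution relation -/
lemma distr (a c r : ℕ) (ha : 0 < a) (hc : 0 < c) (hr : r < a) :
    ∑ q ∈ Finset.range c, pp (a * c) (r + a * q) = (r : ℝ) / a - 1 / 2 := by
  have ha' : (a : ℝ) ≠ 0 := by positivity
  have hc' : (c : ℝ) ≠ 0 := by positivity
  have : ∀ q ∈ Finset.range c, pp (a * c) (r + a * q) =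
      ((r : ℝ) / (a * c) - 1 / 2) + (q : ℝ) * (1 / c) := by
    intro q hq
    have hq := Finset.mem_range.1 hq
    unfold pp
    rw [Nat.mod_eq_of_lt (by nlinarith)]
    push_cast; field_simp; ring
  rw [Finset.sum_congr rfl this, Finset.sum_add_distrib, ← Finset.sum_mul, sum_range_id]
  simp; field_simp; ring

lemma sum_pp_pp (a b c : ℕ) (ha : 0 < a) (hb : 0 < b) (hc : 0 < c) (hbc : Nat.Coprime b c) :
    ∑ n ∈ Finset.range (a * b * c), pp (a * c) n * pp (a * b) n = (a : ℝ) / 12 + 1 / (6 * a) := by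
  have ha' : (a : ℝ) ≠ 0 := by positivity
  let i : ℕ → ℕ × ℕ × ℕ := fun n => (n % a, (n % (a * c)) / a, (n % (a * b)) / a)
  let T := Finset.range a ×ˢ (Finset.range c ×ˢ Finset.range b)
  have hmaps : ∀ n ∈ Finset.range (a * b * c), i n ∈ T := by
    intro n _
    simp only [i, T, Finset.mem_product, Finset.mem_range]
    exact ⟨Nat.mod_lt _ ha, Nat.div_lt_of_lt_mul (Nat.mod_lt _ (by positivity)),
      Nat.div_lt_of_lt_mul (Nat.mod_lt _ (by positivity))⟩
  have key : ∀ n m, n % a + a * ((n % (a * m)) / a) = n % (a * m) := by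
    intro n m
    conv_rhs => rw [← Nat.mod_add_div (n % (a * m)) a, Nat.mod_mul_right_mod]
  have hinj : Set.InjOn i (Finset.range (a * b * c)) := by
    intro x hx y hy h
    simp only [i, Prod.mk.injEq] at h
    obtain ⟨h1, h2, h3⟩ := h
    have e1 : x ≡ y [MOD a * c] := by
      unfold Nat.ModEq; rw [← key x c, ← key y c, h1, h2]
    have e2 : x ≡ y [MOD a * b] := by
      unfold Nat.ModEq; rw [← key x b, ← key y b, h1, h3]
    have e3 : x ≡ y [MOD a * b * c] := by
      have : Nat.lcm (a * c) (a * b) = a * b * c := by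
        rw [Nat.lcm_mul_left, hbc.symm.lcm_eq_mul]; ring
      rw [← this]
      exact Nat.mod_lcm e1 e2
    have hx : x < a * b * c := by simpa using hx
    have hy : y < a * b * c := by simpa using hy
    exact Nat.ModEq.eq_of_lt_of_lt e3 hx hy
  have himg : (Finset.range (a * b * c)).image i = T := by
    apply Finset.eq_of_subset_of_card_le
    · exact Finset.image_subset_iff.2 hmaps
    · rw [Finset.card_image_of_injOn hinj]
      simp only [T, Finset.card_product, Finset.card_range]
      apply le_of_eq; ring
  have step : ∑ n ∈ Finset.range (a * b * c), pp (a * c) n * pp (a * b) n =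
      ∑ x ∈ T, pp (a * c) (x.1 + a * x.2.1) * pp (a * b) (x.1 + a * x.2.2) := by
    rw [← himg, Finset.sum_image hinj]
    refine Finset.sum_congr rfl fun n _ => ?_
    simp only [i, key]
    unfold pp
    rw [Nat.mod_mod, Nat.mod_mod]
  rw [step]
  simp only [T]
  rw [Finset.sum_product]
  have : ∀ r ∈ Finset.range a, ∑ y ∈ Finset.range c ×ˢ Finset.range b,
      pp (a * c) (r + a * y.1) * pp (a * b) (r + a * y.2) =
      (r : ℝ) ^ 2 * (1 / a ^ 2) - r * (1 / a) + 1 / 4 := by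
    intro r hr
    have hr := Finset.mem_range.1 hr
    rw [Finset.sum_product]
    simp only []
    rw [← Finset.sum_mul_sum, distr a c r ha hc hr, distr a b r ha hb hr]
    field_simp; ring
  rw [Finset.sum_congr rfl this, Finset.sum_add_distrib, Finset.sum_sub_distrib,
    ← Finset.sum_mul, ← Finset.sum_mul, sum_range_id, sum_range_sq']
  simp; field_simp; ring

lemma sum_pp (m c : ℕ) (hm : 0 < m) :
    ∑ n ∈ Finset.range (m * c), pp m n = - (c : ℝ) / 2 := by
  have hm' : (m : ℝ) ≠ 0 := by positivity
  induction c with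
  | zero => simp
  | succ c ih =>
    rw [Nat.mul_add, mul_one, Finset.sum_range_add, ih]
    have : ∀ x ∈ Finset.range m, pp m (m * c + x) = (x : ℝ) * (1 / m) - 1 / 2 := by
      intro x hx
      unfold pp
      rw [Nat.mul_add_mod, Nat.mod_eq_of_lt (Finset.mem_range.1 hx)]; ring
    rw [Finset.sum_congr rfl this, Finset.sum_sub_distrib, ← Finset.sum_mul, sum_range_id]
    simp; field_simp; ring

lemma jump_sum (a b c : ℕ) [NeZero a] (hb : 0 < b) (hc : 0 < c) (hab : Nat.Coprime a b)
    (hac : Nat.Coprime a c) :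
    ∑ k ∈ Finset.range a, pp (a * c) (b * c * (k + 1)) * pp (a * b) (b * c * (k + 1)) =
      DD a (b : ZMod a) (c : ZMod a) + 1 / 4 := by
  have ha : 0 < a := NeZero.pos a
  have hsc : ∀ (x y k : ℕ), 0 < x → pp (a * x) (x * y * k) = pp a (y * k) := by
    intro x y k hx
    unfold pp
    have : x * y * k = x * (y * k) := by ring
    rw [this, mul_comm a x, Nat.mul_mod_mul_left]
    push_cast
    have hx' : (x : ℝ) ≠ 0 := by positivity
    rw [mul_div_mul_left _ _ hx']
  have h1 : ∀ k, pp (a * c) (b * c * (k + 1)) * pp (a * b) (b * c * (k + 1)) =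
      pp a (b * (k + 1)) * pp a (c * (k + 1)) := by
    intro k
    rw [hsc b c _ hb, mul_comm b c, hsc c b _ hc]
  simp_rw [h1]
  unfold DD
  rw [← sum_range_zmod a (fun z => sg a ((b : ZMod a) * z) * sg a ((c : ZMod a) * z))]
  have e1 := Finset.sum_range_succ (fun k : ℕ => pp a (b * k) * pp a (c * k)) a
  rw [Finset.sum_range_succ'] at e1
  have h2 : ∀ x : ℕ, pp a (x * a) = -1 / 2 := by intro x; unfold pp; simp; norm_num
  have h3 : pp a 0 = -1 / 2 := by unfold pp; simp; norm_num
  simp only [mul_zero, h2, h3] at e1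
  have e2 : ∑ k ∈ Finset.range a, pp a (b * (k + 1)) * pp a (c * (k + 1)) =
      ∑ k ∈ Finset.range a, pp a (b * k) * pp a (c * k) := by linarith
  rw [e2]
  have h4 : ∀ x k : ℕ, Nat.Coprime a x → k ∈ Finset.range a →
      sg a ((x : ZMod a) * (k : ZMod a)) = pp a (x * k) + (if k = 0 then 1 / 2 else 0) := by
    intro x k hx hk
    have hk := Finset.mem_range.1 hk
    unfold sg pp
    rw [← Nat.cast_mul, ZMod.val_natCast]
    simp only [ZMod.natCast_eq_zero_iff]
    by_cases h0 : k = 0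
    · simp [h0]
    · rw [if_neg, if_neg h0, add_zero]
      intro hd
      have := Nat.le_of_dvd (by omega) (hx.dvd_of_dvd_mul_left hd)
      omega
  have h5 : ∀ k ∈ Finset.range a, sg a ((b : ZMod a) * (k : ZMod a)) *
      sg a ((c : ZMod a) * (k : ZMod a)) =
      pp a (b * k) * pp a (c * k) - (if k = 0 then 1 / 4 else 0) := by
    intro k hk
    rw [h4 b k hab hk, h4 c k hac hk]
    by_cases h0 : k = 0
    · subst h0; simp only [mul_zero, h3, if_true]; norm_num
    · simp [h0]
  rw [Finset.sum_congr rfl h5, Finset.sum_sub_distrib]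
  rw [Finset.sum_ite_eq' (Finset.range a) 0]
  simp [ha]

lemma three_term (a b c : ℕ) [NeZero a] [NeZero b] [NeZero c] (hab : Nat.Coprime a b)
    (hac : Nat.Coprime a c) (hbc : Nat.Coprime b c) :
    DD a (b : ZMod a) (c : ZMod a) + DD b (a : ZMod b) (c : ZMod b) +
      DD c (a : ZMod c) (b : ZMod c) =
      ((a : ℝ) ^ 2 + b ^ 2 + c ^ 2) / (12 * a * b * c) - 1 / 4 := by
  have ha : 0 < a := NeZero.pos a
  have hb : 0 < b := NeZero.pos b
  have hc : 0 < c := NeZero.pos c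
  have ha' : (a : ℝ) ≠ 0 := by positivity
  have hb' : (b : ℝ) ≠ 0 := by positivity
  have hc' : (c : ℝ) ≠ 0 := by positivity
  have hpt : ∀ n : ℕ,
      pp (b * c) (n + 1) * pp (a * c) (n + 1) * pp (a * b) (n + 1)
        - pp (b * c) n * pp (a * c) n * pp (a * b) n
      + (if b * c ∣ n + 1 then 1 else 0) * (pp (a * c) (n + 1) * pp (a * b) (n + 1))
      + (if a * c ∣ n + 1 then 1 else 0) * (pp (b * c) (n + 1) * pp (a * b) (n + 1))
      + (if a * b ∣ n + 1 then 1 else 0) * (pp (b * c) (n + 1) * pp (a * c) (n + 1))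
      - (if a * b * c ∣ n + 1 then 1 else 0) * (1 / 2)
      = 1 / (b * c) * (pp (a * c) n * pp (a * b) n) + 1 / (a * c) * (pp (b * c) n * pp (a * b) n)
        + 1 / (a * b) * (pp (b * c) n * pp (a * c) n)
        + 1 / (b * c) * (1 / (a * c)) * pp (a * b) n + 1 / (b * c) * (1 / (a * b)) * pp (a * c) n
        + 1 / (a * c) * (1 / (a * b)) * pp (b * c) n
        + 1 / (b * c) * (1 / (a * c)) * (1 / (a * b)) := by
    intro n
    have e1 := pp_succ (b * c) n (by positivity)
    have e2 := pp_succ (a * c) n (by positivity)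
    have e3 := pp_succ (a * b) n (by positivity)
    push_cast at e1 e2 e3
    have f1 : pp (b * c) n = pp (b * c) (n + 1) + (if b * c ∣ n + 1 then 1 else 0) - 1 / (b * c) := by
      linarith
    have f2 : pp (a * c) n = pp (a * c) (n + 1) + (if a * c ∣ n + 1 then 1 else 0) - 1 / (a * c) := by
      linarith
    have f3 : pp (a * b) n = pp (a * b) (n + 1) + (if a * b ∣ n + 1 then 1 else 0) - 1 / (a * b) := by
      linarith
    have hz : ∀ m, m ∣ n + 1 → pp m (n + 1) = -1 / 2 := by
      intro m hm
      unfold pp; rw [Nat.mod_eq_zero_of_dvd hm]; simp; norm_num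
    have d1 : b * c ∣ n + 1 → a * c ∣ n + 1 → a * b * c ∣ n + 1 := by
      intro h h'
      have := Nat.lcm_dvd h h'
      rwa [Nat.lcm_mul_right, hab.symm.lcm_eq_mul, mul_comm b a] at this
    have d2 : b * c ∣ n + 1 → a * b ∣ n + 1 → a * b * c ∣ n + 1 := by
      intro h h'
      rw [mul_comm a b] at h'
      have := Nat.lcm_dvd h' h
      rwa [Nat.lcm_mul_left, hac.lcm_eq_mul, ← mul_assoc, mul_comm b a] at this
    have d3 : a * c ∣ n + 1 → a * b ∣ n + 1 → a * b * c ∣ n + 1 := by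
      intro h h'
      have := Nat.lcm_dvd h' h
      rwa [Nat.lcm_mul_left, hbc.lcm_eq_mul, ← mul_assoc] at this
    rw [f1, f2, f3]
    by_cases h : a * b * c ∣ n + 1
    · have g1 : b * c ∣ n + 1 := (Dvd.intro_left a (by ring)).trans h
      have g2 : a * c ∣ n + 1 := (Dvd.intro_left b (by ring)).trans h
      have g3 : a * b ∣ n + 1 := (Dvd.intro_left c (by ring)).trans h
      simp only [h, g1, g2, g3, if_true, hz _ g1, hz _ g2, hz _ g3]
      ring
    · by_cases g1 : b * c ∣ n + 1
      · have g2 : ¬ a * c ∣ n + 1 := fun g => h (d1 g1 g)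
        have g3 : ¬ a * b ∣ n + 1 := fun g => h (d2 g1 g)
        simp only [h, g1, g2, g3, if_true, if_false]; ring
      · by_cases g2 : a * c ∣ n + 1
        · have g3 : ¬ a * b ∣ n + 1 := fun g => h (d3 g2 g)
          simp only [h, g1, g2, g3, if_true, if_false]; ring
        · by_cases g3 : a * b ∣ n + 1
          · simp only [h, g1, g2, g3, if_true, if_false]; ring
          · simp only [h, g1, g2, g3, if_false]; ring
  have hsum := Finset.sum_congr (rfl : Finset.range (a * b * c) = _) (fun n _ => hpt n)
  simp only [Finset.sum_add_distrib, Finset.sum_sub_distrib, ← Finset.mul_sum] at hsum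
  have t0 := Finset.sum_range_sub
    (fun n => pp (b * c) n * pp (a * c) n * pp (a * b) n) (a * b * c)
  rw [Finset.sum_sub_distrib] at t0
  have z1 : ∀ m n, m ∣ n → pp m n = -1 / 2 := by
    intro m n hm
    unfold pp; rw [Nat.mod_eq_zero_of_dvd hm]; simp; norm_num
  rw [z1 (b * c) (a * b * c) (Dvd.intro_left a (by ring)),
    z1 (a * c) (a * b * c) (Dvd.intro_left b (by ring)),
    z1 (a * b) (a * b * c) (Dvd.intro_left c (by ring)),
    z1 _ 0 (dvd_zero _), z1 _ 0 (dvd_zero _), z1 _ 0 (dvd_zero _)] at t0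
  have j1 := sum_dvd (b * c) a (by positivity) (fun n => pp (a * c) n * pp (a * b) n)
  have j2 := sum_dvd (a * c) b (by positivity) (fun n => pp (b * c) n * pp (a * b) n)
  have j3 := sum_dvd (a * b) c (by positivity) (fun n => pp (b * c) n * pp (a * c) n)
  have j4 := sum_dvd (a * b * c) 1 (by positivity) (fun n => 1 / 2)
  have k1 := jump_sum a b c hb hc hab hac
  have k2 := jump_sum b a c ha hc hab.symm hbc
  have k3 := jump_sum c a b ha hb hac.symm hbc.symm
  rw [mul_comm b a] at k2
  rw [mul_comm c a, mul_comm c b] at k3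
  have k3' : ∑ k ∈ Finset.range c, pp (b * c) (a * b * (k + 1)) * pp (a * c) (a * b * (k + 1)) =
      DD c (a : ZMod c) (b : ZMod c) + 1 / 4 := by
    rw [← k3]
  rw [show a * (b * c) = a * b * c by ring, k1] at j1
  rw [show b * (a * c) = a * b * c by ring, k2] at j2
  rw [show c * (a * b) = a * b * c by ring, k3'] at j3
  rw [one_mul] at j4
  simp only [Finset.sum_range_one] at j4
  have s1 := sum_pp_pp a b c ha hb hc hbc
  have s2 := sum_pp_pp b a c hb ha hc hac
  have s3 := sum_pp_pp c a b hc ha hb hab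
  rw [mul_comm b a] at s2
  rw [show c * a * b = a * b * c by ring, mul_comm c b, mul_comm c a] at s3
  have r1 := sum_pp (a * b) c (by positivity)
  have r2 := sum_pp (a * c) b (by positivity)
  have r3 := sum_pp (b * c) a (by positivity)
  rw [show a * c * b = a * b * c by ring] at r2
  rw [show b * c * a = a * b * c by ring] at r3
  rw [j1, j2, j3, s1, s2, s3, r1, r2, r3] at hsum
  rw [← Finset.sum_mul] at j4 hsum
  rw [j4] at hsum
  simp only [Finset.sum_const, Finset.card_range, nsmul_eq_mul] at hsum
  push_cast at hsum
  rw [t0] at hsum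
  have fin : ((a : ℝ) ^ 2 + b ^ 2 + c ^ 2) / (12 * a * b * c) - 1 / 4 =
     (1 / (b * c) * ((a : ℝ) / 12 + 1 / (6 * a)) + 1 / (a * c) * ((b : ℝ) / 12 + 1 / (6 * b))
        + 1 / (a * b) * ((c : ℝ) / 12 + 1 / (6 * c))
        + 1 / (b * c) * (1 / (a * c)) * (-(c : ℝ) / 2) + 1 / (b * c) * (1 / (a * b)) * (-(b : ℝ) / 2)
        + 1 / (a * c) * (1 / (a * b)) * (-(a : ℝ) / 2)
        + a * b * c * (1 / (b * c) * (1 / (a * c)) * (1 / (a * b)))) - 1 / 4 := by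
    field_simp; ring
  rw [fin]
  linarith

theorem stmt_3 (a b t : ℕ) (ha : 0 < a) (hb : 0 < b) (ht : 0 < t)
    (hab : Nat.Coprime a b) (htdvd : t ∣ a ^ 2 + 1) (hbt : Nat.Coprime b t)
    (astar bstar : ℤ)
    (hastar : (a : ℤ) * astar ≡ 1 [ZMOD (b : ℤ)])
    (hbstar : (b : ℤ) * bstar ≡ 1 [ZMOD (a : ℤ)])
    (hbmod : (b : ℤ) ≡ 1 [ZMOD (t : ℤ)] ∨ (b : ℤ) ≡ -1 [ZMOD (t : ℤ)]) :
    S ((t : ℤ) * astar) b + S ((t : ℤ) * bstar) a =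
      ((a : ℝ) ^ 2 + (b : ℝ) ^ 2 + (t : ℝ) ^ 2) / ((t : ℝ) * a * b) - 3 := by
  have : NeZero a := ⟨ha.ne'⟩
  have : NeZero b := ⟨hb.ne'⟩
  have : NeZero t := ⟨ht.ne'⟩
  have ha' : (a : ℝ) ≠ 0 := by positivity
  have hb' : (b : ℝ) ≠ 0 := by positivity
  have ht' : (t : ℝ) ≠ 0 := by positivity
  have hat : Nat.Coprime a t := by
    apply Nat.Coprime.coprime_dvd_right htdvd
    have : Nat.Coprime a (1 + a * a) := by simp
    rwa [show a ^ 2 + 1 = 1 + a * a by ring]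
  have h3 := three_term a b t hab hat hbt
  have general : ∀ (x y : ℕ) [NeZero y] (z : ℤ), Nat.Coprime x y →
      (x : ℤ) * z ≡ 1 [ZMOD (y : ℤ)] →
      S ((t : ℤ) * z) y = 12 * DD y (x : ZMod y) (t : ZMod y) := by
    intro x y _ z hxy hz
    have hz' : (x : ZMod y) * (z : ZMod y) = 1 := by
      have := (ZMod.intCast_eq_intCast_iff _ _ _).2 hz
      push_cast at this; exact this
    rw [S_eq]
    congr 1
    rw [← DD_smul y _ _ (ZMod.unitOfCoprime x hxy)]
    rw [ZMod.coe_unitOfCoprime]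
    congr 1
    · ring
    · push_cast; linear_combination (t : ZMod y) * hz'
  rw [general a b astar hab hastar, general b a bstar hab.symm hbstar]
  have hD1 : DD t (a : ZMod t) 1 = 0 := by
    have e := DD_smul t (a : ZMod t) 1 (ZMod.unitOfCoprime a hat)
    rw [ZMod.coe_unitOfCoprime] at e
    have hsq : (a : ZMod t) * a = -1 := by
      have := (ZMod.natCast_eq_zero_iff (a ^ 2 + 1) t).2 htdvd
      push_cast at this
      linear_combination this
    rw [hsq, mul_one, DD_neg, DD_comm] at e
    linarith
  have hD : DD t (a : ZMod t) (b : ZMod t) = 0 := by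
    rcases hbmod with h | h
    · have := (ZMod.intCast_eq_intCast_iff _ _ _).2 h
      push_cast at this
      rw [this, hD1]
    · have := (ZMod.intCast_eq_intCast_iff _ _ _).2 h
      push_cast at this
      rw [this, DD_comm, DD_neg, DD_comm, hD1, neg_zero]
  rw [hD] at h3
  have fin : ((a : ℝ) ^ 2 + (b : ℝ) ^ 2 + (t : ℝ) ^ 2) / ((t : ℝ) * a * b) - 3 =
      12 * (((a : ℝ) ^ 2 + b ^ 2 + t ^ 2) / (12 * a * b * t) - 1 / 4) := by
    field_simp; ring
  rw [fin, ← h3]; ring
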